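/- For every n×n complex matrix D, the centralizer dimension N(D) never lies strictly between n² − 4n + 8 and n² − 2n + 2: there is no D with n² − 4n + 8 < N(D) < n² − 2n + 2. (Thus the value of N(D) immediately below the submaximal value n² − 2n + 2 is n² − 4n + 8, attained for the partition (2,2,1,…,1) when n ≥ 4.) -/

import Mathlib

/-!
Pass to endomorphisms `f` of a finite-dimensional space `V`, and write `m = dim ker f`. The
endomorphisms `H` with `H f = f H = 0` form a copy of `Hom(V / range f, ker f)`, of dimension `m²`,
inside the centralizer of `f`. They are exactly the kernel of the restriction map from the
centralizer of `f` to the centralizer of `f|_{range f}`. Hence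
* `m² ≤ N(f) ≤ m² + N(f|_{range f}) ≤ m² + (n - m)²`, and `m² + 1 ≤ N(f)` when `f ≠ 0`
  (the identity is a further element of the centralizer).

Replacing `f` by `f - μ` changes nothing in the centralizer. So if some `μ` has geometric
multiplicity `m` with `2 ≤ m ≤ n - 2`, then `N ≤ m² + (n - m)² ≤ n² - 4n + 8`; if some `μ` has
`m = n - 1` or `m = n`, then `N ≥ (n - 1)² + 1 = n² - 2n + 2`. Otherwise all geometric
multiplicities are at most one, and splitting off one eigenvalue at a time yields `N ≤ n`.
-/

namespace CentralizerGap

open Module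

section

variable {V : Type*} [AddCommGroup V] [Module ℂ V]

/-- The centralizer of `f` in `End V`, as a linear subspace. -/
def commutant (f : End ℂ V) : Submodule ℂ (End ℂ V) :=
  LinearMap.ker (LinearMap.mulLeft ℂ f - LinearMap.mulRight ℂ f)

lemma mem_commutant {f H : End ℂ V} : H ∈ commutant f ↔ ∀ x, f (H x) = H (f x) := by
  simp [commutant, sub_eq_zero, LinearMap.ext_iff]

lemma commutant_sub_scalar (f : End ℂ V) (μ : ℂ) :
    commutant (f - μ • (1 : End ℂ V)) = commutant f := by
  ext H
  simp [mem_commutant]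

/-- Extend a map `V / range f → ker f` to the endomorphism of `V` that it induces. -/
def extend (f : End ℂ V) :
    ((V ⧸ LinearMap.range f) →ₗ[ℂ] LinearMap.ker f) →ₗ[ℂ] End ℂ V where
  toFun g := (LinearMap.ker f).subtype ∘ₗ g ∘ₗ (LinearMap.range f).mkQ
  map_add' g h := by ext; simp
  map_smul' c g := by ext; simp

lemma extend_apply (f : End ℂ V) (g) (x : V) :
    extend f g x = (g ((LinearMap.range f).mkQ x) : V) := rfl

lemma extend_injective (f : End ℂ V) : Function.Injective (extend f) := by
  intro g h hgh
  ext x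
  simpa [extend_apply] using LinearMap.congr_fun hgh x

lemma mem_range_extend {f H : End ℂ V} :
    H ∈ LinearMap.range (extend f) ↔ (∀ x, f (H x) = 0) ∧ ∀ x, H (f x) = 0 := by
  constructor
  · rintro ⟨g, rfl⟩
    refine ⟨fun x => (g _).2, fun x => ?_⟩
    have : (LinearMap.range f).mkQ (f x) = 0 := by simp
    rw [extend_apply, this]
    simp
  · rintro ⟨h1, h2⟩
    refine ⟨(LinearMap.range f).liftQ (H.codRestrict (LinearMap.ker f) h1) ?_, ?_⟩
    · rintro _ ⟨x, rfl⟩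
      exact Subtype.ext (h2 x)
    · ext x
      rfl

lemma range_extend_le (f : End ℂ V) : LinearMap.range (extend f) ≤ commutant f := by
  intro H hH
  obtain ⟨h1, h2⟩ := mem_range_extend.1 hH
  exact mem_commutant.2 fun x => by rw [h1, h2]

/-- The endomorphism that `f` induces on its own range. -/
def onRange (f : End ℂ V) : End ℂ (LinearMap.range f) :=
  f.restrict fun x _ => LinearMap.mem_range_self f x

/-- Restriction of the centralizer of `f` to `range f`, which it preserves. -/
def restrictHom (f : End ℂ V) : commutant f →ₗ[ℂ] commutant (onRange f) where
  toFun H := ⟨H.1.restrict (p := LinearMap.range f) (q := LinearMap.range f) (by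
      rintro _ ⟨x, rfl⟩
      exact ⟨H.1 x, mem_commutant.1 H.2 x⟩), by
    rw [mem_commutant]
    intro x
    ext
    exact mem_commutant.1 H.2 x⟩
  map_add' H K := by ext; rfl
  map_smul' c H := by ext; rfl

variable [FiniteDimensional ℂ V]

lemma finrank_range_extend (f : End ℂ V) :
    finrank ℂ (LinearMap.range (extend f)) = finrank ℂ (LinearMap.ker f) ^ 2 := by
  rw [LinearMap.finrank_range_of_inj (extend_injective f), finrank_linearMap]
  have h1 := (LinearMap.range f).finrank_quotient_add_finrank
  have h2 := f.finrank_range_add_finrank_ker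
  have h3 : finrank ℂ (V ⧸ LinearMap.range f) = finrank ℂ (LinearMap.ker f) := by omega
  rw [h3, sq]

lemma le_finrank_commutant (f : End ℂ V) :
    finrank ℂ (LinearMap.ker f) ^ 2 ≤ finrank ℂ (commutant f) := by
  rw [← finrank_range_extend]
  exact Submodule.finrank_mono (range_extend_le f)

lemma lt_finrank_commutant {f : End ℂ V} (hf : f ≠ 0) :
    finrank ℂ (LinearMap.ker f) ^ 2 < finrank ℂ (commutant f) := by
  rw [← finrank_range_extend]
  refine Submodule.finrank_lt_finrank_of_lt (lt_of_le_of_ne (range_extend_le f) fun h => hf ?_)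
  have h1 : (1 : End ℂ V) ∈ LinearMap.range (extend f) := by
    rw [h, mem_commutant]
    simp
  ext x
  exact (mem_range_extend.1 h1).1 x

lemma finrank_le_ker_add {W U : Type*} [AddCommGroup W] [Module ℂ W] [FiniteDimensional ℂ W]
    [AddCommGroup U] [Module ℂ U] [FiniteDimensional ℂ U] (P : Submodule ℂ W) (Q : Submodule ℂ U)
    (φ : P →ₗ[ℂ] Q) : finrank ℂ P ≤ finrank ℂ (LinearMap.ker φ) + finrank ℂ Q := by
  have h1 := φ.finrank_range_add_finrank_ker
  have h2 := Submodule.finrank_le (LinearMap.range φ)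
  omega

/-- The kernel of the restriction map consists of the `H` with `H f = f H = 0`, so rank-nullity
bounds the centralizer of `f` by that of the induced endomorphism of `range f`. -/
lemma finrank_commutant_le (f : End ℂ V) :
    finrank ℂ (commutant f) ≤
      finrank ℂ (LinearMap.ker f) ^ 2 + finrank ℂ (commutant (onRange f)) := by
  have h1 := finrank_le_ker_add _ _ (restrictHom f)
  have h3 : finrank ℂ (LinearMap.ker (restrictHom f)) ≤ finrank ℂ (LinearMap.ker f) ^ 2 := by
    rw [← finrank_range_extend,
      ← Submodule.finrank_map_subtype_eq (commutant f) (LinearMap.ker (restrictHom f))]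
    refine Submodule.finrank_mono ?_
    rintro _ ⟨H, hH, rfl⟩
    have h0 : ∀ x, H.1 (f x) = 0 := fun x => by
      have := congrArg (fun G => ((G.1 ⟨f x, LinearMap.mem_range_self f x⟩ :
        LinearMap.range f) : V)) (LinearMap.mem_ker.1 hH)
      exact this
    exact mem_range_extend.2 ⟨fun x => (mem_commutant.1 H.2 x).trans (h0 x), h0⟩
  omega

lemma finrank_commutant_le_sq (f : End ℂ V) :
    finrank ℂ (commutant f) ≤
      finrank ℂ (LinearMap.ker f) ^ 2 + finrank ℂ (LinearMap.range f) ^ 2 := by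
  refine (finrank_commutant_le f).trans (Nat.add_le_add_left ?_ _)
  refine (Submodule.finrank_le _).trans ?_
  rw [finrank_linearMap, sq]

end

/-- If every eigenvalue has geometric multiplicity one, the centralizer has dimension at most
`dim V`: each step to the range of `f - μ` lowers both dimensions, the first by at most one and the
second by exactly one. -/
lemma finrank_commutant_le_of_simple (n : ℕ) :
    ∀ (V : Type) [AddCommGroup V] [Module ℂ V] [FiniteDimensional ℂ V] (f : End ℂ V),
      finrank ℂ V = n →
      (∀ μ : ℂ, finrank ℂ (LinearMap.ker (f - μ • (1 : End ℂ V))) ≤ 1) →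
      finrank ℂ (commutant f) ≤ n := by
  induction n with
  | zero =>
    intro V _ _ _ f hV _
    refine (Submodule.finrank_le _).trans ?_
    simp [finrank_linearMap, hV]
  | succ n ih =>
    intro V _ _ _ f hV hf
    have : Nontrivial V := nontrivial_of_finrank_pos (R := ℂ) (by omega)
    obtain ⟨μ, hμ⟩ := Module.End.exists_eigenvalue f
    set g := f - μ • (1 : End ℂ V) with hg
    have hpos : 0 < finrank ℂ (LinearMap.ker g) := by
      obtain ⟨v, hv⟩ := hμ.exists_hasEigenvector
      have hvk : v ∈ LinearMap.ker g := by
        simp [hg, hv.apply_eq_smul]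
      have : Nontrivial (LinearMap.ker g) :=
        ⟨⟨v, hvk⟩, 0, fun h => hv.2 (congrArg Subtype.val h)⟩
      exact finrank_pos
    have hker : finrank ℂ (LinearMap.ker g) = 1 := le_antisymm (hf μ) hpos
    have hrank := g.finrank_range_add_finrank_ker
    have hle := finrank_commutant_le g
    rw [hg, commutant_sub_scalar, ← hg, hker] at hle
    have := ih (LinearMap.range g) (onRange g) (by omega) fun ν => by
      -- The `ν`-eigenspace on the range embeds in the `(μ + ν)`-eigenspace of `f`.
      refine le_trans ?_ (hf (μ + ν))
      rw [← Submodule.finrank_map_subtype_eq (LinearMap.range g)]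
      refine Submodule.finrank_mono ?_
      rintro _ ⟨x, hx, rfl⟩
      have hx' : g x.1 - ν • x.1 = 0 := congrArg Subtype.val (LinearMap.mem_ker.1 hx)
      rw [LinearMap.mem_ker, ← hx']
      simp [hg, add_smul, sub_sub]
    omega

/-- A matrix and the endomorphism it defines have centralizers of the same dimension. -/
lemma finrank_commutant_toLin {n : ℕ} (D : Matrix (Fin n) (Fin n) ℂ) :
    finrank ℂ (LinearMap.ker (LinearMap.mulLeft ℂ D - LinearMap.mulRight ℂ D)) =
      finrank ℂ (commutant (Matrix.toLinAlgEquiv' D)) := by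
  set e := (Matrix.toLinAlgEquiv' : Matrix (Fin n) (Fin n) ℂ ≃ₐ[ℂ] _)
  rw [← LinearEquiv.finrank_map_eq e.toLinearEquiv]
  have : Submodule.map (e.toLinearEquiv : _ →ₗ[ℂ] _)
      (LinearMap.ker (LinearMap.mulLeft ℂ D - LinearMap.mulRight ℂ D)) = commutant (e D) := by
    ext H
    obtain ⟨K, rfl⟩ := e.surjective H
    have hl : e K ∈ Submodule.map (e.toLinearEquiv : _ →ₗ[ℂ] _)
        (LinearMap.ker (LinearMap.mulLeft ℂ D - LinearMap.mulRight ℂ D)) ↔ D * K = K * D := by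
      constructor
      · rintro ⟨L, hL, hLK⟩
        obtain rfl : L = K := e.injective hLK
        simpa [sub_eq_zero] using hL
      · intro h
        exact ⟨K, by simpa [sub_eq_zero] using h, rfl⟩
    rw [hl, ← e.injective.eq_iff, map_mul, map_mul]
    simp [commutant, sub_eq_zero]
  exact congrArg (fun S : Submodule ℂ (Module.End ℂ (Fin n → ℂ)) => finrank ℂ S) this

end CentralizerGap

open CentralizerGap in
/-- The dimension `N(D)` of the centralizer of an `n × n` complex matrix `D`
never lies strictly between `n² − 4n + 8` and `n² − 2n + 2`. -/
theorem centralizer_dim_gap {n : ℕ} (D : Matrix (Fin n) (Fin n) ℂ) :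
    ¬ ((n : ℤ) ^ 2 - 4 * n + 8 <
        (Module.finrank ℂ
          (LinearMap.ker (LinearMap.mulLeft ℂ D - LinearMap.mulRight ℂ D)) : ℤ) ∧
      (Module.finrank ℂ
          (LinearMap.ker (LinearMap.mulLeft ℂ D - LinearMap.mulRight ℂ D)) : ℤ) <
        (n : ℤ) ^ 2 - 2 * n + 2) := by
  rw [finrank_commutant_toLin]
  set f : Module.End ℂ (Fin n → ℂ) := Matrix.toLinAlgEquiv' D
  rintro ⟨hlo, hhi⟩
  have hn : 4 ≤ n := by
    have : (3 : ℤ) < n := by linarith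
    omega
  by_cases hs : ∀ μ : ℂ,
      Module.finrank ℂ (LinearMap.ker (f - μ • (1 : Module.End ℂ (Fin n → ℂ)))) ≤ 1
  · have h := finrank_commutant_le_of_simple n (Fin n → ℂ) f (by simp) hs
    zify at h hn
    nlinarith
  · push Not at hs
    obtain ⟨μ, hμ⟩ := hs
    rw [← commutant_sub_scalar f μ] at hlo hhi
    set g := f - μ • (1 : Module.End ℂ (Fin n → ℂ))
    have hrank := g.finrank_range_add_finrank_ker
    rw [Module.finrank_fin_fun] at hrank
    have hle := finrank_commutant_le_sq g
    have hge := le_finrank_commutant g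
    have hgt : g ≠ 0 → _ := lt_finrank_commutant
    generalize Module.finrank ℂ (commutant g) = N at *
    by_cases hr : Module.finrank ℂ (LinearMap.range g) ≤ 1
    · by_cases hg : g = 0
      · have h0 : Module.finrank ℂ (LinearMap.range g) = 0 := by simp [hg]
        rw [h0, zero_add] at hrank
        rw [hrank] at hge
        zify at hge hn
        nlinarith
      · have h1 := hgt hg
        have hm : n - 1 ≤ Module.finrank ℂ (LinearMap.ker g) := by omega
        have h2 : (n - 1) ^ 2 < N := lt_of_le_of_lt (Nat.pow_le_pow_left hm 2) h1
        zify [show 1 ≤ n by omega] at h2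
        nlinarith
    · -- With `m, r ≥ 2` and `m + r = n`, the bound `m² + r²` is at most `(n - 2)² + 2²`.
      generalize Module.finrank ℂ (LinearMap.range g) = r at *
      generalize Module.finrank ℂ (LinearMap.ker g) = m at *
      push Not at hr
      subst hrank
      zify at hle hr hμ
      push_cast at hlo
      nlinarith [mul_nonneg (show (0 : ℤ) ≤ r - 2 by linarith) (show (0 : ℤ) ≤ m - 2 by linarith)]
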